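/- Let n ≥ 3 and k ≥ 1 be integers. Then the subgroup of SL_n(ℤ) generated by the upper triangular unipotent matrices and the lower triangular unipotent matrices lying in the principal congruence subgroup SL_n(kℤ) has finite index in SL_n(ℤ). -/

import Mathlib

/-!
Write `q` for the level, `E(q)` for the group generated by the elementary matrices of level `q`,
`N(q)` for its normal closure and `Γ(q)` for the principal congruence subgroup. The subgroup in
question contains `E(q)`, so it suffices that `E(q)` has finite index.

* `N(q²) ≤ E(q)` (Tits): a conjugate of an elementary matrix of level `q²` has the form
  `1 + c v wᵀ` with `v` unimodular and `w` orthogonal to `v`. Such a `w` is a combination of the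
  vectors `v_j e_i - v_i e_j`, and for these the transvection can be written as a product of
  elements of `E(q)` with the help of a third index.
* `⁅Γ(q), E(1)⁆ ≤ N(q)` over a principal ideal domain: the stable range condition reduces an element
  of `Γ(q)`, modulo `N(q)` and conjugation, to one fixing a basis vector.
* `E(1)` is everything over a Euclidean domain, and it is perfect. Hence the image of `Γ(q)` in the
  perfect group `SL / N(q)` is central of finite index. By Schur's theorem the commutator subgroup
  of `SL / N(q)`, which is the whole group, is finite.

The last two points, applied to `q²` in place of `q`, show that `N(q²)` has finite index.
-/

open Matrix
open scoped commutatorElement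

section CentralizerMod

variable {G : Type*} [Group G] {N : Subgroup G} [N.Normal] {s : Set G} {g : G}

/-- The subgroup of elements commuting with every element of `s` modulo the normal subgroup `N`. -/
def centralizerMod (N : Subgroup G) [N.Normal] (s : Set G) : Subgroup G :=
  (Subgroup.centralizer (QuotientGroup.mk' N '' s)).comap (QuotientGroup.mk' N)

lemma mem_centralizerMod_iff : g ∈ centralizerMod N s ↔ ∀ x ∈ s, ⁅x, g⁆ ∈ N := by
  simp only [centralizerMod, Subgroup.mem_comap, Subgroup.mem_centralizer_iff_commutator_eq_one,
    Set.forall_mem_image, ← map_commutatorElement]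
  exact forall₂_congr fun x _ => QuotientGroup.eq_one_iff _

lemma mem_centralizerMod_of_subset (h : s ⊆ centralizerMod N {g}) : g ∈ centralizerMod N s := by
  refine mem_centralizerMod_iff.2 fun x hx => ?_
  rw [← commutatorElement_inv]
  exact inv_mem (mem_centralizerMod_iff.1 (h hx) g rfl)

lemma le_centralizerMod (N : Subgroup G) [N.Normal] (s : Set G) : N ≤ centralizerMod N s :=
  fun _ hx => mem_centralizerMod_iff.2 fun y _ =>
    mul_mem (‹N.Normal›.conj_mem _ hx y) (inv_mem hx)

lemma conj_mem_centralizerMod_iff {K : Subgroup G} {u : G} (hu : u ∈ K) :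
    u * g * u⁻¹ ∈ centralizerMod N K ↔ g ∈ centralizerMod N K := by
  have conj_mem : ∀ u ∈ K, ∀ g ∈ centralizerMod N K, u * g * u⁻¹ ∈ centralizerMod N K := by
    intro u hu g hg
    rw [show u * g * u⁻¹ = ⁅u, g⁆ * g by rw [commutatorElement_def, inv_mul_cancel_right]]
    exact mul_mem (le_centralizerMod N _ (mem_centralizerMod_iff.1 hg u hu)) hg
  refine ⟨fun h => ?_, conj_mem u hu g⟩
  simpa [mul_assoc] using conj_mem u⁻¹ (inv_mem hu) _ h

end CentralizerMod

section Schur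

lemma commutatorElement_mul_center {G : Type*} [Group G] (a b : G) (z w : Subgroup.center G) :
    ⁅a * z, b * w⁆ = ⁅a, b⁆ := by
  have hz : ∀ x, x * (z : G) = z * x := Subgroup.mem_center_iff.1 z.2
  have hw : ∀ x, x * (w : G) = w * x := Subgroup.mem_center_iff.1 w.2
  calc ⁅a * z, b * w⁆ = a * (z * (b * w)) * (z : G)⁻¹ * a⁻¹ * (w : G)⁻¹ * b⁻¹ := by
        rw [commutatorElement_def]; group
    _ = a * b * (w * a⁻¹) * (w : G)⁻¹ * b⁻¹ := by rw [← hz]; group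
    _ = ⁅a, b⁆ := by rw [← hw, commutatorElement_def]; group

lemma finite_commutatorSet_of_finiteIndex_center (G : Type*) [Group G]
    [(Subgroup.center G).FiniteIndex] : Finite (commutatorSet G) := by
  refine (Set.finite_range fun p : (G ⧸ Subgroup.center G) × (G ⧸ Subgroup.center G) =>
    ⁅p.1.out, p.2.out⁆).subset ?_
  rintro _ ⟨a, b, rfl⟩
  obtain ⟨z, hz⟩ := QuotientGroup.mk_out_eq_mul (Subgroup.center G) a
  obtain ⟨w, hw⟩ := QuotientGroup.mk_out_eq_mul (Subgroup.center G) b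
  exact ⟨(a, b), by simp only [hz, hw, commutatorElement_mul_center]⟩

lemma finite_of_isPerfect_of_finiteIndex_center (G : Type*) [Group G] [Group.IsPerfect G]
    [(Subgroup.center G).FiniteIndex] : Finite G := by
  have := finite_commutatorSet_of_finiteIndex_center G
  have : Finite (commutator G) := inferInstance
  rw [Group.IsPerfect.commutator_eq_top] at this
  exact Finite.of_equiv _ Subgroup.topEquiv.toEquiv

lemma finiteIndex_of_commutator_top_le {G : Type*} [Group G] [Group.IsPerfect G]
    {Γ N : Subgroup G} [Γ.FiniteIndex] [N.Normal] (h : ⁅Γ, ⊤⁆ ≤ N) : N.FiniteIndex := by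
  have hΓ : Γ ≤ (Subgroup.center (G ⧸ N)).comap (QuotientGroup.mk' N) := by
    rw [← Subgroup.centralizer_univ,
      ← Set.image_univ_of_surjective (QuotientGroup.mk'_surjective N)]
    refine fun g hg => mem_centralizerMod_of_subset fun x _ => mem_centralizerMod_iff.2 ?_
    rintro _ rfl
    exact h (Subgroup.commutator_mem_commutator hg (Subgroup.mem_top x))
  have := Subgroup.finiteIndex_of_le hΓ
  have : (Subgroup.center (G ⧸ N)).FiniteIndex := ⟨by
    rw [← Subgroup.index_comap_of_surjective _ (QuotientGroup.mk'_surjective N)]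
    exact this.index_ne_zero⟩
  have := finite_of_isPerfect_of_finiteIndex_center (G ⧸ N)
  exact Subgroup.finiteIndex_of_finite_quotient

end Schur

section VecTransvection

variable {ι R : Type*} [Fintype ι] [DecidableEq ι] [CommRing R]

lemma vecMul_inv_dotProduct_smul (g : SpecialLinearGroup ι R) (v w : ι → R) :
    (w ᵥ* (g⁻¹).1) ⬝ᵥ (g • v) = w ⬝ᵥ v := by
  change (w ᵥ* (g⁻¹).1) ⬝ᵥ (g.1 *ᵥ v) = _
  rw [dotProduct_mulVec, vecMul_vecMul, ← Matrix.SpecialLinearGroup.coe_mul, inv_mul_cancel,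
    Matrix.SpecialLinearGroup.coe_one, vecMul_one]

lemma vecMul_inv_eq_self {g : SpecialLinearGroup ι R} {w : ι → R} (h : w ᵥ* g.1 = w) :
    w ᵥ* (g⁻¹).1 = w := by
  conv_lhs => rw [← h]
  rw [vecMul_vecMul, ← Matrix.SpecialLinearGroup.coe_mul, mul_inv_cancel,
    Matrix.SpecialLinearGroup.coe_one, vecMul_one]

/-- The transvection `1 + v wᵀ`, where `w` is orthogonal to `v`, as an element of the special linear
group. -/
def vecTransvection (v w : ι → R) (h : w ⬝ᵥ v = 0) : SpecialLinearGroup ι R :=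
  ⟨1 + vecMulVec v w, by
    rw [vecMulVec_eq Unit, det_one_add_replicateCol_mul_replicateRow, h, add_zero]⟩

lemma coe_vecTransvection (v w : ι → R) (h : w ⬝ᵥ v = 0) :
    (vecTransvection v w h).1 = 1 + vecMulVec v w := rfl

lemma vecTransvection_smul {v w : ι → R} (h : w ⬝ᵥ v = 0) (x : ι → R) :
    vecTransvection v w h • x = x + (w ⬝ᵥ x) • v := by
  change (1 + vecMulVec v w) *ᵥ x = _
  rw [add_mulVec, one_mulVec, vecMulVec_mulVec, op_smul_eq_smul]

lemma vecMul_vecTransvection {v w : ι → R} (h : w ⬝ᵥ v = 0) (y : ι → R) :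
    y ᵥ* (vecTransvection v w h).1 = y + (y ⬝ᵥ v) • w := by
  rw [coe_vecTransvection, vecMul_add, vecMul_one, vecMul_vecMulVec]

lemma vecTransvection_add_left {v v' w : ι → R} (h : w ⬝ᵥ v = 0) (h' : w ⬝ᵥ v' = 0) :
    vecTransvection (v + v') w (by rw [dotProduct_add, h, h', add_zero]) =
      vecTransvection v w h * vecTransvection v' w h' := by
  apply Subtype.ext
  simp only [Matrix.SpecialLinearGroup.coe_mul, coe_vecTransvection, mul_add, add_mul, mul_one,
    one_mul, vecMulVec_mul_vecMulVec, h', zero_smul, vecMulVec_zero, add_vecMulVec, add_zero,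
    add_assoc]

lemma vecTransvection_add_right {v w w' : ι → R} (h : w ⬝ᵥ v = 0) (h' : w' ⬝ᵥ v = 0) :
    vecTransvection v (w + w') (by rw [add_dotProduct, h, h', add_zero]) =
      vecTransvection v w h * vecTransvection v w' h' := by
  apply Subtype.ext
  simp only [Matrix.SpecialLinearGroup.coe_mul, coe_vecTransvection, mul_add, add_mul, mul_one,
    one_mul, vecMulVec_mul_vecMulVec, h, zero_smul, vecMulVec_zero, vecMulVec_add, add_zero,
    add_assoc]

lemma conj_vecTransvection (g : SpecialLinearGroup ι R) {v w : ι → R} (h : w ⬝ᵥ v = 0) :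
    g * vecTransvection v w h * g⁻¹ =
      vecTransvection (g • v) (w ᵥ* (g⁻¹).1) (by rw [vecMul_inv_dotProduct_smul, h]) := by
  apply Subtype.ext
  change g.1 * (1 + vecMulVec v w) * (g⁻¹).1 = 1 + vecMulVec (g.1 *ᵥ v) (w ᵥ* (g⁻¹).1)
  rw [mul_add, add_mul, mul_one, mul_vecMulVec, vecMulVec_mul,
    ← Matrix.SpecialLinearGroup.coe_mul, mul_inv_cancel, Matrix.SpecialLinearGroup.coe_one]

lemma commutator_vecTransvection_of_vecMul_eq {g : SpecialLinearGroup ι R} {v w : ι → R}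
    (hg : w ᵥ* g.1 = w) (h : w ⬝ᵥ v = 0) :
    ⁅g, vecTransvection v w h⁆ = vecTransvection (g • v - v) w (by
      rw [dotProduct_sub, ← vecMul_inv_dotProduct_smul g v w, vecMul_inv_eq_self hg,
        sub_self]) := by
  rw [commutatorElement_def, mul_inv_eq_iff_eq_mul, conj_vecTransvection,
    ← vecTransvection_add_left]
  simp only [vecMul_inv_eq_self hg, sub_add_cancel]

lemma commutator_vecTransvection_of_smul_eq {g : SpecialLinearGroup ι R} {v w : ι → R}
    (hg : g • v = v) (h : w ⬝ᵥ v = 0) :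
    ⁅g, vecTransvection v w h⁆ = vecTransvection v (w ᵥ* (g⁻¹).1 - w) (by
      rw [sub_dotProduct, ← vecMul_inv_dotProduct_smul g v w, hg, sub_self]) := by
  rw [commutatorElement_def, mul_inv_eq_iff_eq_mul, conj_vecTransvection,
    ← vecTransvection_add_right]
  simp only [hg, sub_add_cancel]

lemma commutator_vecTransvection {v w v' w' : ι → R} (h : w ⬝ᵥ v = 0) (h' : w' ⬝ᵥ v' = 0)
    (h'' : w' ⬝ᵥ v = 0) :
    ⁅vecTransvection v w h, vecTransvection v' w' h'⁆ =
      vecTransvection ((w ⬝ᵥ v') • v) w' (by rw [dotProduct_smul, h'', smul_zero]) := by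
  rw [commutator_vecTransvection_of_vecMul_eq (by
    rw [vecMul_vecTransvection, h'', zero_smul, add_zero])]
  simp only [vecTransvection_smul, add_sub_cancel_left]

/-- The subgroup `H` contains the transvection `1 + v wᵀ`; in particular `w` is orthogonal to
`v`. -/
def ContainsTransvection (H : Subgroup (SpecialLinearGroup ι R)) (v w : ι → R) : Prop :=
  ∃ h : w ⬝ᵥ v = 0, vecTransvection v w h ∈ H

namespace ContainsTransvection

variable {H : Subgroup (SpecialLinearGroup ι R)} {v v' w w' : ι → R}

lemma zero_left : ContainsTransvection H 0 w :=
  ⟨dotProduct_zero w, by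
    convert one_mem H
    exact Subtype.ext (by simp [coe_vecTransvection])⟩

lemma zero_right : ContainsTransvection H v 0 :=
  ⟨zero_dotProduct v, by
    convert one_mem H
    exact Subtype.ext (by simp [coe_vecTransvection])⟩

lemma add_left (hv : ContainsTransvection H v w) (hv' : ContainsTransvection H v' w) :
    ContainsTransvection H (v + v') w := by
  obtain ⟨h, hmem⟩ := hv
  obtain ⟨h', hmem'⟩ := hv'
  exact ⟨_, vecTransvection_add_left h h' ▸ mul_mem hmem hmem'⟩

lemma add_right (hw : ContainsTransvection H v w) (hw' : ContainsTransvection H v w') :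
    ContainsTransvection H v (w + w') := by
  obtain ⟨h, hmem⟩ := hw
  obtain ⟨h', hmem'⟩ := hw'
  exact ⟨_, vecTransvection_add_right h h' ▸ mul_mem hmem hmem'⟩

lemma sum_left {κ : Type*} {s : Finset κ} {f : κ → ι → R}
    (hf : ∀ x ∈ s, ContainsTransvection H (f x) w) : ContainsTransvection H (∑ x ∈ s, f x) w :=
  Finset.sum_induction f (ContainsTransvection H · w) (fun _ _ => add_left) zero_left hf

lemma sum_right {κ : Type*} {s : Finset κ} {f : κ → ι → R}
    (hf : ∀ x ∈ s, ContainsTransvection H v (f x)) : ContainsTransvection H v (∑ x ∈ s, f x) :=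
  Finset.sum_induction f (ContainsTransvection H v ·) (fun _ _ => add_right) zero_right hf

lemma smul_left_iff (c : R) :
    ContainsTransvection H (c • v) w ↔ ContainsTransvection H v (c • w) := by
  simp only [ContainsTransvection, vecTransvection, dotProduct_smul, smul_dotProduct,
    smul_vecMulVec, vecMulVec_smul]

lemma commutator (h : ContainsTransvection H v w) (h' : ContainsTransvection H v' w')
    (hv : w' ⬝ᵥ v = 0) (hw : w ⬝ᵥ v' = 1) : ContainsTransvection H v w' := by
  obtain ⟨hwv, hmem⟩ := h
  obtain ⟨hwv', hmem'⟩ := h'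
  refine ⟨hv, ?_⟩
  have key := H.commutator_le_self (Subgroup.commutator_mem_commutator hmem hmem')
  rw [commutator_vecTransvection hwv hwv' hv] at key
  simpa only [hw, one_smul] using key

end ContainsTransvection
end VecTransvection

section Elementary

variable {ι R : Type*} [Fintype ι] [DecidableEq ι] [CommRing R] {I J : Ideal R}
  {H N : Subgroup (SpecialLinearGroup ι R)}

/-- The subgroup `E_ι(R, I)` of the special linear group generated by the elementary matrices
`1 + c E_{ij}` with `i ≠ j` and `c ∈ I`. -/
def elementarySubgroup (ι : Type*) {R : Type*} [Fintype ι] [DecidableEq ι] [CommRing R]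
    (I : Ideal R) : Subgroup (SpecialLinearGroup ι R) :=
  Subgroup.closure
    {g | ∃ (i j : ι) (hij : i ≠ j), ∃ c ∈ I, SpecialLinearGroup.transvection hij c = g}

/-- The principal congruence subgroup of level `I`: the matrices congruent to `1` modulo `I`. -/
def congruenceSubgroup (ι : Type*) {R : Type*} [Fintype ι] [DecidableEq ι] [CommRing R]
    (I : Ideal R) : Subgroup (SpecialLinearGroup ι R) :=
  (SpecialLinearGroup.map (Ideal.Quotient.mk I)).ker

lemma transvection_eq_vecTransvection {i j : ι} (hij : i ≠ j) (c : R) :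
    SpecialLinearGroup.transvection hij c =
      vecTransvection (Pi.single i c) (Pi.single j 1) (by simp [hij.symm]) := by
  apply Subtype.ext
  rw [SpecialLinearGroup.transvection_coe, coe_vecTransvection]
  congr 1
  ext a b
  rw [single_apply, vecMulVec_apply, Pi.single_apply, Pi.single_apply, mul_ite, mul_one, mul_zero,
    ite_and]
  grind

lemma elementarySubgroup_le_iff :
    elementarySubgroup ι I ≤ H ↔
      ∀ i j, i ≠ j → ∀ c ∈ I, ContainsTransvection H (Pi.single i c) (Pi.single j 1) := by
  rw [elementarySubgroup, Subgroup.closure_le]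
  constructor
  · intro h i j hij c hc
    exact ⟨_, transvection_eq_vecTransvection hij c ▸ h ⟨i, j, hij, c, hc, rfl⟩⟩
  · rintro h _ ⟨i, j, hij, c, hc, rfl⟩
    obtain ⟨_, hmem⟩ := h i j hij c hc
    exact transvection_eq_vecTransvection hij c ▸ hmem

namespace ContainsTransvection

lemma col (hH : elementarySubgroup ι I ≤ H) {v : ι → R} {j : ι} (hj : v j = 0)
    (hv : ∀ i, v i ∈ I) : ContainsTransvection H v (Pi.single j 1) := by
  rw [← Finset.univ_sum_single v]
  refine sum_left fun i _ => ?_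
  rcases eq_or_ne i j with rfl | hij
  · rw [hj, Pi.single_zero]
    exact zero_left
  · exact elementarySubgroup_le_iff.1 hH i j hij _ (hv i)

lemma row (hH : elementarySubgroup ι I ≤ H) {w : ι → R} {i : ι} (hi : w i = 0)
    (hw : ∀ j, w j ∈ I) : ContainsTransvection H (Pi.single i 1) w := by
  rw [← Finset.univ_sum_single w]
  refine sum_right fun j _ => ?_
  rcases eq_or_ne i j with rfl | hij
  · rw [hi, Pi.single_zero]
    exact zero_right
  · have h := elementarySubgroup_le_iff.1 hH i j hij _ (hw j)
    rw [← mul_one (w j), ← smul_eq_mul, Pi.single_smul] at h ⊢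
    exact (smul_left_iff _).1 h

end ContainsTransvection

lemma mem_congruenceSubgroup_iff {g : SpecialLinearGroup ι R} :
    g ∈ congruenceSubgroup ι I ↔ ∀ i j, (g.1 - 1) i j ∈ I := by
  rw [congruenceSubgroup, MonoidHom.mem_ker, Matrix.SpecialLinearGroup.ext_iff]
  refine forall₂_congr fun i j => ?_
  rw [Matrix.sub_apply, ← Ideal.Quotient.mk_eq_mk_iff_sub_mem]
  simp [Matrix.one_apply, apply_ite (Ideal.Quotient.mk I)]

lemma smul_sub_self_mem_of_mem_congruenceSubgroup {g : SpecialLinearGroup ι R}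
    (hg : g ∈ congruenceSubgroup ι I) (v : ι → R) (i : ι) : (g • v - v) i ∈ I := by
  have h : g • v - v = (g.1 - 1) *ᵥ v := by rw [sub_mulVec, one_mulVec]; rfl
  rw [h]
  exact sum_mem fun j _ => I.mul_mem_right _ (mem_congruenceSubgroup_iff.1 hg i j)

lemma vecMul_sub_self_mem_of_mem_congruenceSubgroup {g : SpecialLinearGroup ι R}
    (hg : g ∈ congruenceSubgroup ι I) (w : ι → R) (j : ι) : (w ᵥ* g.1 - w) j ∈ I := by
  have h : w ᵥ* g.1 - w = w ᵥ* (g.1 - 1) := by rw [vecMul_sub, vecMul_one]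
  rw [h]
  exact sum_mem fun i _ => I.mul_mem_left _ (mem_congruenceSubgroup_iff.1 hg i j)

lemma vecTransvection_mem_congruenceSubgroup {v w : ι → R} (h : w ⬝ᵥ v = 0) (hv : ∀ i, v i ∈ I) :
    vecTransvection v w h ∈ congruenceSubgroup ι I :=
  mem_congruenceSubgroup_iff.2 fun i j => by
    rw [coe_vecTransvection, add_sub_cancel_left]
    exact I.mul_mem_right _ (hv i)

/-- The relative elementary subgroup of level `I`: the normal closure of `elementarySubgroup ι I`
in the special linear group. -/
def relElementarySubgroup (ι : Type*) {R : Type*} [Fintype ι] [DecidableEq ι] [CommRing R]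
    (I : Ideal R) : Subgroup (SpecialLinearGroup ι R) :=
  Subgroup.normalClosure (elementarySubgroup ι I : Set (SpecialLinearGroup ι R))

instance : (relElementarySubgroup ι I).Normal := Subgroup.normalClosure_normal

lemma elementarySubgroup_le_relElementarySubgroup (I : Ideal R) :
    elementarySubgroup ι I ≤ relElementarySubgroup ι I :=
  Subgroup.le_normalClosure

lemma relElementarySubgroup_le_congruenceSubgroup (I : Ideal R) :
    relElementarySubgroup ι I ≤ congruenceSubgroup ι I :=
  have : (congruenceSubgroup ι I).Normal := MonoidHom.normal_ker _
  Subgroup.normalClosure_le_normal <| elementarySubgroup_le_iff.2 fun i j hij c hc =>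
    ⟨by simp [hij.symm], vecTransvection_mem_congruenceSubgroup _ fun l => by
      rw [Pi.single_apply]; split_ifs <;> simp [hc]⟩

end Elementary

section Tits

variable {ι R : Type*} [Fintype ι] [DecidableEq ι] [CommRing R] {I : Ideal R}

lemma exists_ne_and_ne {ι : Type*} [Fintype ι] (hι : 3 ≤ Fintype.card ι)
    (i j : ι) : ∃ l, l ≠ i ∧ l ≠ j := by
  classical
  obtain ⟨l, -, hl⟩ := Finset.exists_mem_notMem_of_card_lt_card
    (s := {i, j}) (t := Finset.univ) (Finset.card_le_two.trans_lt hι)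
  exact ⟨l, by simpa using hl⟩

lemma containsTransvection_koszul (hι : 3 ≤ Fintype.card ι) {a b : R} (ha : a ∈ I) (hb : b ∈ I)
    {i j : ι} (hij : i ≠ j) (v : ι → R) :
    ContainsTransvection (elementarySubgroup ι I) ((a * b) • v)
      (Pi.single i (v j) - Pi.single j (v i)) := by
  obtain ⟨l, hli, hlj⟩ := exists_ne_and_ne hι i j
  set u : ι → R := Pi.single i (v j) - Pi.single j (v i) with hu
  set p : ι → R := Pi.single i (v i) + Pi.single j (v j) with hp
  have hup : u ⬝ᵥ p = 0 := by simp [hu, hp, hij, hij.symm, mul_comm]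
  have off_support : ContainsTransvection (elementarySubgroup ι I) ((a * b) • (v - p)) u := by
    have hi : (v - p) i = 0 := by simp [hp, hij]
    have hj : (v - p) j = 0 := by simp [hp, hij.symm]
    have hc (t : R) (m : ι) : (t • (a * b) • (v - p)) m ∈ I :=
      I.mul_mem_left _ (I.mul_mem_right _ (I.mul_mem_right _ ha))
    have hu' : u = v j • Pi.single i 1 + -v i • Pi.single j 1 := by
      simp [hu, ← Pi.single_smul, sub_eq_add_neg]
    rw [hu']
    refine .add_right ?_ ?_ <;> rw [← ContainsTransvection.smul_left_iff]
    · exact .col le_rfl (by simp [hi]) (hc _)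
    · exact .col le_rfl (by simp [hj]) (hc _)
  have on_support : ContainsTransvection (elementarySubgroup ι I) ((a * b) • p) u := by
    rw [mul_comm, mul_smul, ContainsTransvection.smul_left_iff]
    have hl : (Pi.single l 1 : ι → R) ⬝ᵥ Pi.single l 1 = 1 := by simp
    refine .commutator (.col le_rfl ?_ fun m => I.mul_mem_right _ ha)
      (.row le_rfl ?_ fun m => I.mul_mem_right _ hb) ?_ hl
    · simp [hp, hli, hlj]
    · simp [hu, hli, hlj]
    · simp only [smul_dotProduct, dotProduct_smul, hup, smul_zero]
  rw [← sub_add_cancel v p, smul_add]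
  exact off_support.add_left on_support

lemma eq_sum_koszul {u v w : ι → R} (huv : u ⬝ᵥ v = 1) (hwv : w ⬝ᵥ v = 0) :
    w = ∑ i, ∑ j, (w i * u j) • (Pi.single i (v j) - Pi.single j (v i)) := by
  ext l
  have expand (i j : ι) : ((w i * u j) • (Pi.single i (v j) - Pi.single j (v i)) : ι → R) l =
      (if l = i then w i * (u j * v j) else 0) - (if l = j then u j * (w i * v i) else 0) := by
    simp only [Pi.smul_apply, Pi.sub_apply, Pi.single_apply, smul_eq_mul, mul_sub, mul_ite,
      mul_zero, mul_assoc, mul_left_comm]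
  have sum_fst : ∑ i, ∑ j, (if l = i then w i * (u j * v j) else 0) = w l * (u ⬝ᵥ v) := by
    rw [Finset.sum_comm]
    simp only [Finset.sum_ite_eq, Finset.mem_univ, if_true, dotProduct, Finset.mul_sum]
  have sum_snd : ∑ i, ∑ j, (if l = j then u j * (w i * v i) else 0) = u l * (w ⬝ᵥ v) := by
    simp only [Finset.sum_ite_eq, Finset.mem_univ, if_true, dotProduct, Finset.mul_sum]
  simp only [Finset.sum_apply, expand, Finset.sum_sub_distrib, sum_fst, sum_snd, huv, hwv, mul_one,
    mul_zero, sub_zero]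

lemma containsTransvection_of_mem_mul (hι : 3 ≤ Fintype.card ι) {c : R} (hc : c ∈ I * I)
    {u v w : ι → R} (huv : u ⬝ᵥ v = 1) (hwv : w ⬝ᵥ v = 0) :
    ContainsTransvection (elementarySubgroup ι I) (c • v) w := by
  induction hc using Submodule.mul_induction_on' with
  | mem_mul_mem a ha b hb =>
    rw [eq_sum_koszul huv hwv]
    refine .sum_right fun i _ => .sum_right fun j _ => ?_
    rcases eq_or_ne i j with rfl | hij
    · rw [sub_self, smul_zero]
      exact .zero_right
    · rw [← ContainsTransvection.smul_left_iff, ← mul_smul, ← mul_assoc]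
      exact containsTransvection_koszul hι (I.mul_mem_left _ ha) hb hij v
  | add c _ c' _ hc hc' =>
    rw [add_smul]
    exact hc.add_left hc'

lemma relElementarySubgroup_mul_self_le (hι : 3 ≤ Fintype.card ι) (I : Ideal R) :
    relElementarySubgroup ι (I * I) ≤ elementarySubgroup ι I := by
  have conj_le (g : SpecialLinearGroup ι R) :
      elementarySubgroup ι (I * I) ≤ (elementarySubgroup ι I).comap (MulAut.conj g).toMonoidHom :=
    elementarySubgroup_le_iff.2 fun i j hij c hc => by
      have hc' : (Pi.single i c : ι → R) = c • Pi.single i 1 := by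
        rw [← Pi.single_smul, smul_eq_mul, mul_one]
      rw [hc']
      have h : (Pi.single j 1 : ι → R) ⬝ᵥ Pi.single i 1 = 0 := by simp [hij.symm]
      have h' : (Pi.single j 1 : ι → R) ⬝ᵥ (c • Pi.single i 1) = 0 := by
        rw [dotProduct_smul, h, smul_zero]
      refine ⟨h', ?_⟩
      obtain ⟨_, hmem⟩ := containsTransvection_of_mem_mul hι hc
        ((vecMul_inv_dotProduct_smul g (Pi.single i 1) (Pi.single i 1)).trans (by simp))
        ((vecMul_inv_dotProduct_smul g _ _).trans h)
      simpa only [Subgroup.mem_comap, MulEquiv.coe_toMonoidHom, MulAut.conj_apply,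
        conj_vecTransvection, smul_comm g c] using hmem
  rw [relElementarySubgroup, Subgroup.normalClosure, Subgroup.closure_le]
  intro x hx
  obtain ⟨y, hy, hyx⟩ := Group.mem_conjugatesOfSet_iff.1 hx
  obtain ⟨g, rfl⟩ := isConj_iff.1 hyx
  exact conj_le g hy

end Tits

section Euclidean

variable {ι R : Type*} [Fintype ι] [DecidableEq ι] {T : Finset ι} {i j : ι}

/-- The elements of `elementarySubgroup ι ⊤` fixing all standard basis vectors `e_j` with `j ∉ T`:
multiplying by them on the left does not disturb columns `j ∉ T` that are already reduced. -/
def elementarySubgroupFixingCompl (R : Type*) [CommRing R] (T : Finset ι) :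
    Subgroup (SpecialLinearGroup ι R) :=
  elementarySubgroup ι ⊤ ⊓ fixingSubgroup _ ((fun j => (Pi.single j 1 : ι → R)) '' {j | j ∉ T})

lemma mem_elementarySubgroupFixingCompl [CommRing R] {g : SpecialLinearGroup ι R} :
    g ∈ elementarySubgroupFixingCompl R T ↔
      g ∈ elementarySubgroup ι ⊤ ∧ ∀ j ∉ T, g • (Pi.single j 1 : ι → R) = Pi.single j 1 := by
  simp [elementarySubgroupFixingCompl, mem_fixingSubgroup_iff]

lemma exists_smul_eq_add_smul [CommRing R] (hj : j ∈ T) {u : ι → R} (hu : u j = 0) :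
    ∃ g ∈ elementarySubgroupFixingCompl R T, ∀ x : ι → R, g • x = x + x j • u := by
  obtain ⟨h, hmem⟩ : ContainsTransvection (elementarySubgroup ι ⊤) u (Pi.single j 1) :=
    .col le_rfl hu fun _ => Submodule.mem_top
  have smul_eq (x : ι → R) : vecTransvection u (Pi.single j 1) h • x = x + x j • u := by
    rw [vecTransvection_smul, single_one_dotProduct]
  refine ⟨_, mem_elementarySubgroupFixingCompl.2 ⟨hmem, fun l hl => ?_⟩, smul_eq⟩
  rw [smul_eq, Pi.single_eq_of_ne (ne_of_mem_of_not_mem hj hl), zero_smul, add_zero]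

lemma vecMul_inv_apply_eq_zero [CommRing R] {g : SpecialLinearGroup ι R}
    (hg : g • (Pi.single j 1 : ι → R) = Pi.single j 1) {w : ι → R} (hw : w j = 0) :
    (w ᵥ* (g⁻¹).1) j = 0 := by
  have h := vecMul_inv_dotProduct_smul g (Pi.single j 1) w
  rwa [hg, dotProduct_single_one, dotProduct_single_one, hw] at h

variable [EuclideanDomain R]

lemma exists_isUnit_smul_apply {v w : ι → R} (hw : ∀ j ∉ T, w j = 0) (hwv : w ⬝ᵥ v = 1) :
    ∃ g ∈ elementarySubgroupFixingCompl R T, ∃ j ∈ T, IsUnit ((g • v) j) := by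
  let entries : Set R :=
    {x | x ≠ 0 ∧ ∃ g ∈ elementarySubgroupFixingCompl R T, ∃ j ∈ T, (g • v) j = x}
  have entries_nonempty : entries.Nonempty := by
    by_contra! h
    have hv : ∀ j ∈ T, v j = 0 := fun j hj => by
      by_contra hj0
      exact h.subset ⟨hj0, 1, one_mem _, j, hj, by rw [one_smul]⟩
    refine one_ne_zero (hwv.symm.trans (Finset.sum_eq_zero fun j _ => ?_))
    by_cases hj : j ∈ T
    · rw [hv j hj, mul_zero]
    · rw [hw j hj, zero_mul]
  obtain ⟨m, ⟨hm, g, hg, i, hi, rfl⟩, hmin⟩ :=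
    EuclideanDomain.r_wellFounded.has_min entries entries_nonempty
  -- The remainders of the other entries modulo a minimal one are again entries, hence zero.
  have dvd (j : ι) (hj : j ∈ T) : (g • v) i ∣ (g • v) j := by
    rcases eq_or_ne j i with rfl | hji
    · exact dvd_rfl
    obtain ⟨e, he, smul_eq⟩ := exists_smul_eq_add_smul hi
      (u := Pi.single j (-((g • v) j / (g • v) i))) (Pi.single_eq_of_ne hji.symm _)
    have hmod : (e • g • v) j = (g • v) j % (g • v) i := by
      rw [smul_eq, EuclideanDomain.mod_eq_sub_mul_div]
      simp [sub_eq_add_neg]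
    by_contra hndvd
    refine hmin _ ⟨?_, e * g, mul_mem he hg, j, hj, by rw [mul_smul, hmod]⟩
      (EuclideanDomain.mod_lt _ hm)
    rwa [Ne, EuclideanDomain.mod_eq_zero]
  refine ⟨g, hg, i, hi, isUnit_of_dvd_one ?_⟩
  rw [← hwv, ← vecMul_inv_dotProduct_smul g v w]
  refine Finset.dvd_sum fun j _ => ?_
  by_cases hj : j ∈ T
  · exact (dvd j hj).mul_left _
  · rw [vecMul_inv_apply_eq_zero ((mem_elementarySubgroupFixingCompl.1 hg).2 j hj) (hw j hj),
      zero_mul]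
    exact dvd_zero _

lemma exists_smul_apply_eq_one {v w : ι → R} (hi : i ∈ T) (hj : j ∈ T) (hij : i ≠ j)
    (hw : ∀ j ∉ T, w j = 0) (hwv : w ⬝ᵥ v = 1) :
    ∃ g ∈ elementarySubgroupFixingCompl R T, (g • v) i = 1 := by
  have of_isUnit (x : ι → R) {l m : ι} (hl : l ∈ T) (hlm : l ≠ m) (hx : IsUnit (x l)) :
      ∃ g ∈ elementarySubgroupFixingCompl R T, (g • x) m = 1 := by
    obtain ⟨y, hy⟩ := hx.exists_right_inv
    obtain ⟨g, hg, smul_eq⟩ := exists_smul_eq_add_smul hl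
      (u := Pi.single m (y * (1 - x m))) (Pi.single_eq_of_ne hlm _)
    refine ⟨g, hg, ?_⟩
    rw [smul_eq, Pi.add_apply, Pi.smul_apply, Pi.single_eq_same, smul_eq_mul, ← mul_assoc, hy,
      one_mul, add_sub_cancel]
  obtain ⟨g, hg, l, hl, hunit⟩ := exists_isUnit_smul_apply hw hwv
  by_cases hli : l = i
  · subst hli
    obtain ⟨e, he, hej⟩ := of_isUnit _ hl hij hunit
    obtain ⟨f, hf, hfl⟩ := of_isUnit _ hj hij.symm (hej ▸ isUnit_one)
    exact ⟨f * (e * g), mul_mem hf (mul_mem he hg), by rw [mul_smul, mul_smul, hfl]⟩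
  · obtain ⟨e, he, hei⟩ := of_isUnit _ hl hli hunit
    exact ⟨e * g, mul_mem he hg, by rw [mul_smul, hei]⟩

end Euclidean

section Generation

variable {ι R : Type*} [Fintype ι] [DecidableEq ι] {T : Finset ι} {i : ι}

lemma exists_smul_eq_single_of_apply_eq_one [CommRing R] {v : ι → R} (hi : i ∈ T) (hv : v i = 1) :
    ∃ g ∈ elementarySubgroupFixingCompl R T, g • v = Pi.single i 1 := by
  obtain ⟨g, hg, smul_eq⟩ := exists_smul_eq_add_smul hi (u := Pi.single i 1 - v) (by simp [hv])
  exact ⟨g, hg, by rw [smul_eq, hv, one_smul, add_sub_cancel]⟩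

lemma smul_single_apply_self_eq_one [CommRing R] {g : SpecialLinearGroup ι R}
    (hg : ∀ j ≠ i, g • (Pi.single j 1 : ι → R) = Pi.single j 1) :
    (g • (Pi.single i 1 : ι → R)) i = 1 := by
  have hcol : (1 : Matrix ι ι R).updateCol i (g • (Pi.single i 1 : ι → R)) = g.1 := by
    ext a j
    rcases eq_or_ne j i with rfl | hj
    · simp [Matrix.SpecialLinearGroup.smul_def]
    · have hgj : g.1 a j = (Pi.single j 1 : ι → R) a := by
        simpa [Matrix.SpecialLinearGroup.smul_def] using congrFun (hg j hj) a
      rw [updateCol_ne hj, hgj, one_apply, Pi.single_apply]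
  rw [← Module.End.one_apply (R := R) (g • (Pi.single i 1 : ι → R)), ← cramer_one, cramer_apply,
    hcol, g.2]

variable [EuclideanDomain R]

lemma exists_smul_smul_single_eq_single {g : SpecialLinearGroup ι R} (hi : i ∈ T)
    (hg : ∀ j ∉ T, g • (Pi.single j 1 : ι → R) = Pi.single j 1) :
    ∃ h ∈ elementarySubgroupFixingCompl R T,
      h • g • (Pi.single i 1 : ι → R) = Pi.single i 1 := by
  obtain ⟨h, hh, hhi⟩ : ∃ h ∈ elementarySubgroupFixingCompl R T,
      (h • g • (Pi.single i 1 : ι → R)) i = 1 := by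
    by_cases hT : ∃ j ∈ T, i ≠ j
    · obtain ⟨j, hj, hij⟩ := hT
      refine exists_smul_apply_eq_one (w := Pi.single i 1 ᵥ* (g⁻¹).1) hi hj hij (fun j hj => ?_) ?_
      · exact vecMul_inv_apply_eq_zero (hg j hj)
          (Pi.single_eq_of_ne (ne_of_mem_of_not_mem hi hj).symm _)
      · rw [vecMul_inv_dotProduct_smul, dotProduct_single_one, Pi.single_eq_same]
    · push Not at hT
      refine ⟨1, one_mem _, ?_⟩
      rw [one_smul]
      exact smul_single_apply_self_eq_one fun j hj => hg j fun hjT => hj (hT j hjT).symm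
  obtain ⟨e, he, hei⟩ := exists_smul_eq_single_of_apply_eq_one hi hhi
  exact ⟨e * h, mul_mem he hh, by rw [mul_smul, hei]⟩

theorem elementarySubgroup_top_eq_top : elementarySubgroup ι (⊤ : Ideal R) = ⊤ := by
  suffices h : ∀ (T : Finset ι) (g : SpecialLinearGroup ι R),
      (∀ j ∉ T, g • (Pi.single j 1 : ι → R) = Pi.single j 1) → g ∈ elementarySubgroup ι ⊤ from
    (Subgroup.eq_top_iff' _).2 fun g => h .univ g fun j hj => absurd (Finset.mem_univ j) hj
  intro T
  induction T using Finset.induction_on with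
  | empty =>
    intro g hg
    convert one_mem (elementarySubgroup ι (⊤ : Ideal R))
    refine Subtype.ext (ext_of_mulVec_single fun j => ?_)
    exact (hg j (Finset.notMem_empty j)).trans (one_mulVec _).symm
  | insert i T _ ih =>
    intro g hg
    obtain ⟨h, hh, hcol⟩ := exists_smul_smul_single_eq_single (Finset.mem_insert_self i T) hg
    obtain ⟨hE, hfix⟩ := mem_elementarySubgroupFixingCompl.1 hh
    refine (Subgroup.mul_mem_cancel_left _ hE).1 (ih (h * g) fun j hj => ?_)
    rw [mul_smul]
    rcases eq_or_ne j i with rfl | hji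
    · exact hcol
    · have hj' : j ∉ insert i T := by simp [hji, hj]
      rw [hg j hj', hfix j hj']

end Generation

section StableRange

variable {ι R : Type*} [CommRing R] [IsDomain R] [IsPrincipalIdealRing R]

/-- For `t` take the product of the prime factors of `d` not dividing `b`. -/
lemma exists_isCoprime_add_mul {a b d x y z : R} (hd : d ≠ 0) (h : x * b + y * a + z * d = 1) :
    ∃ t, IsCoprime (b + t * a) d := by
  classical
  let S : Multiset R := (UniqueFactorizationMonoid.factors d).filter (¬ · ∣ b)
  refine ⟨S.prod, isCoprime_of_prime_dvd (fun h => hd h.2) fun p hp hpb hpd => ?_⟩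
  by_cases hb : p ∣ b
  · rcases hp.dvd_or_dvd ((dvd_add_right hb).1 hpb) with hpS | hpa
    · obtain ⟨r, hr, hpr⟩ := hp.exists_mem_multiset_dvd hpS
      obtain ⟨hrd, hrb⟩ := Multiset.mem_filter.1 hr
      have hrirr := UniqueFactorizationMonoid.irreducible_of_factor r hrd
      exact hrb ((hp.irreducible.associated_of_dvd hrirr hpr).symm.dvd.trans hb)
    · refine hp.not_dvd_one ?_
      rw [← h]
      exact dvd_add (dvd_add (hb.mul_left _) (hpa.mul_left _)) (hpd.mul_left _)
  · obtain ⟨r, hr, hpr⟩ := UniqueFactorizationMonoid.exists_mem_factors_of_dvd hd hp.irreducible hpd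
    have hrS : r ∈ S := Multiset.mem_filter.2 ⟨hr, fun hrb => hb (hpr.dvd.trans hrb)⟩
    have hpS : p ∣ S.prod := hpr.dvd.trans (Multiset.dvd_prod hrS)
    exact hb ((dvd_add_left (hpS.mul_right a)).1 hpb)

lemma exists_dotProduct_add_smul_single_eq_one [Fintype ι] [DecidableEq ι] {i j : ι} (hij : i ≠ j)
    {b x : ι → R} {a y : R} (h : x ⬝ᵥ b + y * a = 1) :
    ∃ r r' : R, ∃ s : ι → R, s ⬝ᵥ (b + a • (Pi.single i r + Pi.single j r')) = 1 := by
  set x' : ι → R := x - Pi.single i (x i) with hx'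
  have hx'i : x' i = 0 := by simp [hx']
  have hx'b : x ⬝ᵥ b = x i * b i + x' ⬝ᵥ b := by simp [hx', sub_dotProduct]
  by_cases hd : x' ⬝ᵥ b = 0
  · refine ⟨0, (1 - b j) * y, Pi.single j 1 + Pi.single i ((1 - b j) * x i), ?_⟩
    simp only [add_dotProduct, single_dotProduct, Pi.add_apply, Pi.smul_apply, smul_eq_mul,
      Pi.single_eq_same, Pi.single_eq_of_ne hij, Pi.single_zero, zero_add]
    linear_combination (1 - b j) * (h - hx'b - hd)
  · obtain ⟨t, p, q, hpq⟩ := exists_isCoprime_add_mul (a := a) (b := b i) (x := x i) (y := y)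
      (z := 1) hd (by linear_combination h - hx'b)
    refine ⟨t, 0, Pi.single i p + q • x', ?_⟩
    simp only [add_dotProduct, single_dotProduct, Pi.add_apply, Pi.smul_apply, smul_eq_mul,
      Pi.single_eq_same, smul_dotProduct, dotProduct_add, dotProduct_smul, dotProduct_single, hx'i,
      Pi.single_zero, add_zero]
    linear_combination hpq

end StableRange

section CommutatorFormula

variable {ι R : Type*} [Fintype ι] [DecidableEq ι] [CommRing R]

lemma mem_centralizerMod_of_smul_eq_of_vecMul_eq {I : Ideal R} {n : ι}
    {g : SpecialLinearGroup ι R} (hg : g ∈ congruenceSubgroup ι I)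
    (hcol : g • (Pi.single n 1 : ι → R) = Pi.single n 1)
    (hrow : (Pi.single n 1 : ι → R) ᵥ* g.1 = Pi.single n 1) :
    g ∈ centralizerMod (relElementarySubgroup ι I) (elementarySubgroup ι (⊤ : Ideal R)) := by
  have hE := elementarySubgroup_le_relElementarySubgroup (ι := ι) I
  set C := centralizerMod (relElementarySubgroup ι I) {g}
  have mem_C (x : SpecialLinearGroup ι R) (hx : ⁅g, x⁆ ∈ relElementarySubgroup ι I) : x ∈ C :=
    mem_centralizerMod_iff.2 fun y hy => hy ▸ hx
  have col (v : ι → R) (hv : v n = 0) : ContainsTransvection C v (Pi.single n 1) := by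
    have hvn : (Pi.single n 1 : ι → R) ⬝ᵥ v = 0 := by rw [single_one_dotProduct, hv]
    refine ⟨hvn, mem_C _ ?_⟩
    rw [commutator_vecTransvection_of_vecMul_eq hrow]
    have hgv : (g • v - v) n = 0 := by
      have h := vecMul_inv_dotProduct_smul g v (Pi.single n 1)
      rwa [vecMul_inv_eq_self hrow, ← sub_eq_zero, ← dotProduct_sub, single_one_dotProduct] at h
    exact (ContainsTransvection.col hE hgv
      (smul_sub_self_mem_of_mem_congruenceSubgroup hg v)).choose_spec
  have row (w : ι → R) (hw : w n = 0) : ContainsTransvection C (Pi.single n 1) w := by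
    have hwn : w ⬝ᵥ (Pi.single n 1 : ι → R) = 0 := by rw [dotProduct_single_one, hw]
    refine ⟨hwn, mem_C _ ?_⟩
    rw [commutator_vecTransvection_of_smul_eq hcol]
    have hgw : (w ᵥ* (g⁻¹).1 - w) n = 0 := by
      rw [Pi.sub_apply, hw, vecMul_inv_apply_eq_zero hcol hw, sub_zero]
    exact (ContainsTransvection.row hE hgw
      (vecMul_sub_self_mem_of_mem_congruenceSubgroup (inv_mem hg) w)).choose_spec
  refine mem_centralizerMod_of_subset (elementarySubgroup_le_iff.2 fun i j hij c _ => ?_)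
  rcases eq_or_ne j n with rfl | hj
  · exact col _ (by simp [hij.symm])
  have hrow_j := row (Pi.single j 1) (Pi.single_eq_of_ne hj.symm 1)
  rcases eq_or_ne i n with rfl | hi
  · rw [← mul_one c, ← smul_eq_mul, Pi.single_smul, ContainsTransvection.smul_left_iff,
      ← Pi.single_smul]
    exact row _ (Pi.single_eq_of_ne hij _)
  · exact (col (Pi.single i c) (by simp [hi.symm])).commutator hrow_j
      (by simp [hij.symm]) (by simp)

lemma mem_centralizerMod_of_smul_single_eq {I : Ideal R} {n : ι}
    {g : SpecialLinearGroup ι R} (hg : g ∈ congruenceSubgroup ι I)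
    (hcol : g • (Pi.single n 1 : ι → R) = Pi.single n 1) :
    g ∈ centralizerMod (relElementarySubgroup ι I) (elementarySubgroup ι (⊤ : Ideal R)) := by
  set r : ι → R := Pi.single n 1 ᵥ* g.1 - Pi.single n 1 with hr
  have hrn : r n = 0 := by
    have h : (Pi.single n 1 ᵥ* g.1) n = 1 := by
      simpa [Matrix.SpecialLinearGroup.smul_def] using congrFun hcol n
    rw [hr, Pi.sub_apply, h, Pi.single_eq_same, sub_self]
  obtain ⟨h, hN⟩ := ContainsTransvection.row (w := -r) (i := n)
    (elementarySubgroup_le_relElementarySubgroup I) (by simp [hrn])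
    fun j => neg_mem (vecMul_sub_self_mem_of_mem_congruenceSubgroup hg _ j)
  refine (Subgroup.mul_mem_cancel_right _ (le_centralizerMod _ _ hN)).1
    (mem_centralizerMod_of_smul_eq_of_vecMul_eq (n := n)
      (mul_mem hg (relElementarySubgroup_le_congruenceSubgroup I hN)) ?_ ?_)
  · rw [mul_smul, vecTransvection_smul, h, zero_smul, add_zero, hcol]
  · have hgr : Pi.single n 1 ᵥ* g.1 = Pi.single n 1 + r := by rw [hr, add_sub_cancel]
    rw [Matrix.SpecialLinearGroup.coe_mul, ← vecMul_vecMul, hgr, vecMul_vecTransvection]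
    simp [hrn]

/-- The off-diagonal part of the column is first made unimodular by the stable range condition;
since the diagonal entry is `1` modulo `q`, a transvection along the row `n` then makes it `1`. -/
lemma exists_smul_add_single_eq_single [IsDomain R] [IsPrincipalIdealRing R]
    (hι : 3 ≤ Fintype.card ι) {n : ι} {q B y : R} {b x : ι → R} (hb : b n = 0)
    (hxy : x ⬝ᵥ b + y * (1 + q * B) = 1) :
    ∃ h ∈ relElementarySubgroup ι (Ideal.span {q}), ∃ u ∈ elementarySubgroup ι (⊤ : Ideal R),
      ∃ h' ∈ relElementarySubgroup ι (Ideal.span {q}), u • (Pi.single n 1 : ι → R) = Pi.single n 1 ∧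
        h' • u • h • (q • b + Pi.single n (1 + q * B)) = Pi.single n 1 := by
  obtain ⟨i, hi, -⟩ := exists_ne_and_ne hι n n
  obtain ⟨j, hj, hji⟩ := exists_ne_and_ne hι n i
  obtain ⟨r, r', s, hs⟩ := exists_dotProduct_add_smul_single_eq_one hji.symm hxy
  set a := 1 + q * B with ha
  set t : ι → R := Pi.single i r + Pi.single j r' with ht
  set b' := b + a • t with hb'
  have htn : t n = 0 := by simp [ht, hi.symm, hj.symm]
  have hb'n : b' n = 0 := by simp [hb', hb, htn]
  set s' := -B • (s - Pi.single n (s n)) with hs'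
  have hs'n : s' n = 0 := by simp [hs']
  have hs'_dot : s' ⬝ᵥ b' = -B := by simp [hs', sub_dotProduct, hs, hb'n]
  have hmem (c : ι → R) (l : ι) : (q • c) l ∈ Ideal.span {q} :=
    Ideal.mul_mem_right _ _ (Ideal.mem_span_singleton_self q)
  have hE := elementarySubgroup_le_relElementarySubgroup (ι := ι) (Ideal.span {q})
  obtain ⟨hh, hmem_h⟩ := ContainsTransvection.col (j := n) hE (by simp [htn]) (hmem t)
  obtain ⟨hu, hmem_u⟩ := ContainsTransvection.row (I := (⊤ : Ideal R)) le_rfl hs'n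
    fun _ => Submodule.mem_top
  obtain ⟨hh', hmem_h'⟩ := ContainsTransvection.col (j := n) hE (by simp [hb'n]) (hmem (-b'))
  refine ⟨_, hmem_h, _, hmem_u, _, hmem_h', ?_, ?_⟩
  · rw [vecTransvection_smul, hu, zero_smul, add_zero]
  have smul_h : vecTransvection _ _ hh • (q • b + Pi.single n a) = q • b' + Pi.single n a := by
    have h : (Pi.single n 1 : ι → R) ⬝ᵥ (q • b + Pi.single n a) = a := by simp [hb]
    rw [vecTransvection_smul, h, smul_comm a q, add_right_comm, ← smul_add]
  have smul_u : vecTransvection _ _ hu • (q • b' + Pi.single n a) = q • b' + Pi.single n 1 := by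
    have h : s' ⬝ᵥ (q • b' + Pi.single n a) = -(q * B) := by simp [hs'_dot, hs'n]
    rw [vecTransvection_smul, h, add_assoc, ← Pi.single_smul, ← Pi.single_add, ha]
    simp
  rw [smul_h, smul_u, vecTransvection_smul]
  simp [hb'n]

theorem commutator_congruenceSubgroup_le [IsDomain R] [IsPrincipalIdealRing R]
    (hι : 3 ≤ Fintype.card ι) (I : Ideal R) :
    ⁅congruenceSubgroup ι I, elementarySubgroup ι (⊤ : Ideal R)⁆ ≤ relElementarySubgroup ι I := by
  suffices h : congruenceSubgroup ι I ≤
      centralizerMod (relElementarySubgroup ι I) (elementarySubgroup ι (⊤ : Ideal R)) by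
    rw [Subgroup.commutator_comm]
    exact Subgroup.commutator_le.2 fun x hx g hg => mem_centralizerMod_iff.1 (h hg) x hx
  intro g hg
  obtain ⟨q, rfl⟩ := IsPrincipalIdealRing.principal I
  obtain ⟨n⟩ : Nonempty ι := Fintype.card_pos_iff.1 (by lia)
  have hdvd := smul_sub_self_mem_of_mem_congruenceSubgroup hg (Pi.single n 1)
  choose B hB using fun i => Ideal.mem_span_singleton'.1 (hdvd i)
  set b := B - Pi.single n (B n) with hb
  have hbn : b n = 0 := by simp [hb]
  have hgn : g • (Pi.single n 1 : ι → R) = q • b + Pi.single n (1 + q * B n) := by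
    have h : g • (Pi.single n 1 : ι → R) = Pi.single n 1 + q • B :=
      eq_add_of_sub_eq' (funext fun i => by rw [Pi.smul_apply, smul_eq_mul, mul_comm, hB])
    rw [h, hb, Pi.single_add, smul_sub, ← Pi.single_smul, smul_eq_mul]
    abel
  set w := (Pi.single n 1 : ι → R) ᵥ* (g⁻¹).1
  have hw : (q • w) ⬝ᵥ b + w n * (1 + q * B n) = 1 := by
    have h := vecMul_inv_dotProduct_smul g (Pi.single n 1) (Pi.single n 1)
    rwa [hgn, dotProduct_add, dotProduct_smul, dotProduct_single, single_one_dotProduct,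
      Pi.single_eq_same, ← smul_dotProduct] at h
  obtain ⟨h, hh, u, hu, h', hh', hun, hred⟩ := exists_smul_add_single_eq_single hι hbn hw
  have hΓ := relElementarySubgroup_le_congruenceSubgroup (ι := ι) (Ideal.span {q})
  have : (congruenceSubgroup ι (Ideal.span {q})).Normal := MonoidHom.normal_ker _
  have key := mem_centralizerMod_of_smul_single_eq (n := n) (g := h' * (u * (h * g) * u⁻¹))
    (mul_mem (hΓ hh') (this.conj_mem _ (mul_mem (hΓ hh) hg) u))
    (by rw [mul_smul, mul_smul, mul_smul, mul_smul, inv_smul_eq_iff.2 hun.symm, hgn, hred])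
  rw [Subgroup.mul_mem_cancel_left _ (le_centralizerMod _ _ hh'), conj_mem_centralizerMod_iff hu,
    Subgroup.mul_mem_cancel_left _ (le_centralizerMod _ _ hh)] at key
  exact key

end CommutatorFormula

section FiniteIndex

variable {ι R : Type*} [Fintype ι] [DecidableEq ι]

lemma elementarySubgroup_top_le_commutator [CommRing R] (hι : 3 ≤ Fintype.card ι) :
    elementarySubgroup ι (⊤ : Ideal R) ≤ commutator (SpecialLinearGroup ι R) := by
  refine elementarySubgroup_le_iff.2 fun i j hij c _ => ?_
  obtain ⟨l, hli, hlj⟩ := exists_ne_and_ne hι i j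
  have hil : (Pi.single l 1 : ι → R) ⬝ᵥ Pi.single i c = 0 := by simp [hli]
  have hlj' : (Pi.single j 1 : ι → R) ⬝ᵥ Pi.single l 1 = 0 := by simp [hlj.symm]
  have hij' : (Pi.single j 1 : ι → R) ⬝ᵥ Pi.single i c = 0 := by simp [hij.symm]
  refine ⟨hij', ?_⟩
  have key := Subgroup.commutator_mem_commutator (H₁ := ⊤) (H₂ := ⊤)
    (Subgroup.mem_top (vecTransvection _ _ hil)) (Subgroup.mem_top (vecTransvection _ _ hlj'))
  rw [commutator_vecTransvection hil hlj' hij'] at key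
  simpa only [single_one_dotProduct, Pi.single_eq_same, one_smul, commutator_def] using key

variable [EuclideanDomain R]

lemma isPerfect_specialLinearGroup (hι : 3 ≤ Fintype.card ι) :
    Group.IsPerfect (SpecialLinearGroup ι R) :=
  ⟨top_unique (elementarySubgroup_top_eq_top (ι := ι) (R := R) ▸
    elementarySubgroup_top_le_commutator hι)⟩

theorem finiteIndex_elementarySubgroup (hι : 3 ≤ Fintype.card ι) (I : Ideal R) [Finite (R ⧸ I)] :
    (elementarySubgroup ι I).FiniteIndex := by
  have := isPerfect_specialLinearGroup (ι := ι) (R := R) hι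
  have : Finite (R ⧸ I * I) := by
    rw [← pow_two]
    exact Ideal.finite_quotient_pow (IsNoetherian.noetherian I) 2
  have : (congruenceSubgroup ι (I * I)).FiniteIndex := Subgroup.finiteIndex_ker _
  have : (relElementarySubgroup ι (I * I)).FiniteIndex :=
    finiteIndex_of_commutator_top_le (elementarySubgroup_top_eq_top (ι := ι) (R := R) ▸
      commutator_congruenceSubgroup_le hι (I * I))
  exact Subgroup.finiteIndex_of_le (relElementarySubgroup_mul_self_le hι I)

end FiniteIndex

section Transvection

variable {ι R : Type*} [Fintype ι] [DecidableEq ι] [CommRing R] {i j : ι} (hij : i ≠ j) (c : R)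

lemma transvection_apply (a b : ι) :
    (SpecialLinearGroup.transvection hij c).1 a b =
      (if a = b then 1 else 0) + if i = a ∧ j = b then c else 0 := by
  rw [SpecialLinearGroup.transvection_coe, Matrix.add_apply, one_apply, single_apply]

lemma transvection_apply_self (a : ι) : (SpecialLinearGroup.transvection hij c).1 a a = 1 := by
  have h : ¬ (i = a ∧ j = a) := fun h => hij (h.1.trans h.2.symm)
  rw [transvection_apply, if_pos rfl, if_neg h, add_zero]

lemma transvection_apply_of_ne {a b : ι} (hab : a ≠ b) (h : ¬ (i = a ∧ j = b)) :
    (SpecialLinearGroup.transvection hij c).1 a b = 0 := by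
  rw [transvection_apply, if_neg hab, if_neg h, add_zero]

lemma dvd_transvection_apply_sub (a b : ι) :
    c ∣ (SpecialLinearGroup.transvection hij c).1 a b - if a = b then 1 else 0 := by
  rw [transvection_apply, add_sub_cancel_left]
  split_ifs
  exacts [dvd_rfl, dvd_zero c]

end Transvection

theorem unipotent_generators_sl_n_general {ι R : Type*} [Fintype ι] [LinearOrder ι]
    [EuclideanDomain R] (hι : 3 ≤ Fintype.card ι) (k : R) [Finite (R ⧸ Ideal.span {k})] :
    (Subgroup.closure
      ({g : Matrix.SpecialLinearGroup ι R |
          (∀ i, g.1 i i = 1) ∧ (∀ i j : ι, j < i → g.1 i j = 0) ∧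
          (∀ i j : ι, k ∣ (g.1 i j - if i = j then 1 else 0))} ∪
       {g : Matrix.SpecialLinearGroup ι R |
          (∀ i, g.1 i i = 1) ∧ (∀ i j : ι, i < j → g.1 i j = 0) ∧
          (∀ i j : ι, k ∣ (g.1 i j - if i = j then 1 else 0))})).FiniteIndex := by
  have := finiteIndex_elementarySubgroup hι (Ideal.span {k})
  refine Subgroup.finiteIndex_of_le (H := elementarySubgroup ι (Ideal.span {k}))
    (Subgroup.closure_mono ?_)
  rintro _ ⟨i, j, hij, c, hc, rfl⟩
  have dvd (a b : ι) := (Ideal.mem_span_singleton.1 hc).trans (dvd_transvection_apply_sub hij c a b)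
  rcases hij.lt_or_gt with hlt | hlt
  · exact .inl ⟨transvection_apply_self hij c, fun a b hab =>
      transvection_apply_of_ne hij c hab.ne' fun h => hab.asymm (h.1 ▸ h.2 ▸ hlt), dvd⟩
  · exact .inr ⟨transvection_apply_self hij c, fun a b hab =>
      transvection_apply_of_ne hij c hab.ne fun h => hab.asymm (h.1 ▸ h.2 ▸ hlt), dvd⟩

/-- For `n ≥ 3` and `k ≥ 1`, the subgroup of `SL_n(ℤ)` generated by the
upper triangular unipotent matrices and the lower triangular unipotent matrices lying in
the principal congruence subgroup `SL_n(kℤ)` has finite index in `SL_n(ℤ)`. -/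
theorem unipotent_generators_sl_n (n k : ℕ) (hn : 3 ≤ n) (hk : 1 ≤ k) :
    (Subgroup.closure
      ({g : Matrix.SpecialLinearGroup (Fin n) ℤ |
          (∀ i, g.1 i i = 1) ∧ (∀ i j : Fin n, j < i → g.1 i j = 0) ∧
          (∀ i j : Fin n, (k : ℤ) ∣ (g.1 i j - if i = j then 1 else 0))} ∪
       {g : Matrix.SpecialLinearGroup (Fin n) ℤ |
          (∀ i, g.1 i i = 1) ∧ (∀ i j : Fin n, i < j → g.1 i j = 0) ∧
          (∀ i j : Fin n, (k : ℤ) ∣ (g.1 i j - if i = j then 1 else 0))})).FiniteIndex := by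
  have : NeZero k := ⟨by lia⟩
  have : Finite (ℤ ⧸ Ideal.span {(k : ℤ)}) :=
    .of_equiv _ (Int.quotientSpanNatEquivZMod k).toEquiv.symm
  exact unipotent_generators_sl_n_general (by rwa [Fintype.card_fin]) (k : ℤ)
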